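/- arXiv:2211.10631 — 2 statements merged into one kernel-verified Lean document; each statement's English description precedes it below -/
import Mathlib

section
/- Let Z be a subset system and P a poset. Then P is weakly meet s_Z-continuous if and only if the complete lattice Γ^Z(P), ordered by inclusion, is weakly meet s_Z-continuous. -/
/-!
Members of `Γ^Z(P)` are lower sets, and principal ideals are members.

If `P` is weakly meet `s_Z`-continuous and `X, U ∈ Γ^Z(P)`, then the relative pseudocomplement
`{y | ↓y ∩ X ⊆ U}` is again in `Γ^Z(P)` (`residual_mem_GammaZ`). Hence if `X` lies in the cut of a
family `𝒟`, it lies in the cut of `{X ∩ D | D ∈ 𝒟}`, which is the image of `𝒟` under a monotone map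
and is contained in `↓X ∩ ↓𝒟`; so every closed family containing `↓X ∩ ↓𝒟` contains `X`.

Conversely, if `x ∈ D^δ` in `P`, then `↓x` lies in the cut of `{↓d | d ∈ D}` in `Γ^Z(P)`. Given
`A ∈ Γ^Z(P)` containing `↓x ∩ ↓D`, the closed family `{C | C ⊆ A}` contains everything below both
`↓x` and some `↓d`, hence contains `↓x`, so `x ∈ A`.
-/

open Set

/-- A subset system on the category of posets. -/
structure SubsetSystem : Type 1 where
  Z : ∀ (P : Type) [PartialOrder P], Set (Set P)
  singleton_mem : ∀ (P : Type) [PartialOrder P] (x : P), {x} ∈ Z P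
  image_mem : ∀ (P : Type) [PartialOrder P] (Q : Type) [PartialOrder Q]
    (f : P → Q), Monotone f → ∀ S ∈ Z P, f '' S ∈ Z Q

/-- The cut operator `A^δ = A^{ul}`. -/
def cutOp {P : Type} [PartialOrder P] (A : Set P) : Set P :=
  lowerBounds (upperBounds A)

/-- The down-closure `↓A`. -/
def dSet {P : Type} [PartialOrder P] (A : Set P) : Set P := {p | ∃ a ∈ A, p ≤ a}

/-- The up-closure `↑A`. -/
def uSet {P : Type} [PartialOrder P] (A : Set P) : Set P := {p | ∃ a ∈ A, a ≤ p}

/-- The subbasic open sets `σ^Z(P)`. -/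
def sigmaZ (Z : SubsetSystem) (P : Type) [PartialOrder P] : Set (Set P) :=
  {U | ∀ S ∈ Z.Z P, (cutOp S ∩ U).Nonempty → (S ∩ U).Nonempty}

/-- The subbasic closed sets `Γ^Z(P)`. -/
def GammaZ (Z : SubsetSystem) (P : Type) [PartialOrder P] : Set (Set P) :=
  {A | ∀ S ∈ Z.Z P, S ⊆ A → cutOp S ⊆ A}

/-- The closure `cl_{σ^Z(P)}(M)`. -/
def clZ (Z : SubsetSystem) {P : Type} [PartialOrder P] (M : Set P) : Set P :=
  ⋂₀ {A | A ∈ GammaZ Z P ∧ M ⊆ A}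

/-- `P` is weakly meet `s_Z`-continuous. -/
def WMSZ (Z : SubsetSystem) (P : Type) [PartialOrder P] : Prop :=
  ∀ x : P, ∀ D ∈ Z.Z P, x ∈ cutOp D → x ∈ clZ Z (Set.Iic x ∩ dSet D)

/-- `A ≪_Z B`. -/
def wayBelowZ (Z : SubsetSystem) {P : Type} [PartialOrder P] (A B : Set P) : Prop :=
  ∀ S ∈ Z.Z P, (cutOp S ∩ uSet B).Nonempty → (S ∩ uSet A).Nonempty

/-- `↟_Z x = {y : y ≪_Z x}`. -/
def ddArrow (Z : SubsetSystem) {P : Type} [PartialOrder P] (x : P) : Set P :=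
  {y | wayBelowZ Z {y} {x}}

/-- `P` is weak `s_Z`-continuous. -/
def WeakSZCont (Z : SubsetSystem) (P : Type) [PartialOrder P] : Prop :=
  ∀ x : P, x ∈ cutOp (ddArrow Z x)

/-- `P` is `s_Z`-continuous. -/
def SZCont (Z : SubsetSystem) (P : Type) [PartialOrder P] : Prop :=
  WeakSZCont Z P ∧ ∀ x : P, ∃ S ∈ Z.Z P, ddArrow Z x = dSet S

/-- `f` is `σ^Z`-continuous. -/
def SigmaZCont (Z : SubsetSystem) {P Q : Type} [PartialOrder P] [PartialOrder Q]
    (f : P → Q) : Prop :=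
  ∀ A ∈ GammaZ Z Q, f ⁻¹' A ∈ GammaZ Z P

/-- The interior w.r.t. the subbasic opens `σ^Z(P)`. -/
def intZ (Z : SubsetSystem) {P : Type} [PartialOrder P] (A : Set P) : Set P :=
  ⋃₀ {U | U ∈ sigmaZ Z P ∧ U ⊆ A}

/-- `Fin P = {↑F : F ⊆_f P}` ordered by reverse inclusion. -/
def FinP (P : Type) [PartialOrder P] : Type :=
  {A : Set P // ∃ F : Set P, F.Finite ∧ A = uSet F}

instance (P : Type) [PartialOrder P] : PartialOrder (FinP P) :=
  PartialOrder.lift (fun A => OrderDual.toDual A.1)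
    (fun A B h => Subtype.ext (OrderDual.toDual.injective h))

/-- The set of minimal elements of `A`. -/
def minSet {P : Type} [PartialOrder P] (A : Set P) : Set P :=
  {x ∈ A | ∀ y ∈ A, y ≤ x → y = x}

/-- `ω_Z(x) = {F finite : F ≪_Z x}`. -/
def omegaZ (Z : SubsetSystem) {P : Type} [PartialOrder P] (x : P) : Set (Set P) :=
  {F | F.Finite ∧ wayBelowZ Z F {x}}

/-- `P` is `s_Z`-quasicontinuous. -/
def SZQuasi (Z : SubsetSystem) (P : Type) [PartialOrder P] : Prop :=
  ∀ p : P,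
    {A : FinP P | ∃ F ∈ omegaZ Z p, A.1 = uSet F} ∈ Z.Z (FinP P) ∧
    Set.Ici p = ⋂ F ∈ omegaZ Z p, uSet F

/-- `Z` has the Rudin property. -/
def RudinProp (Z : SubsetSystem) : Prop :=
  ∀ (P : Type) [PartialOrder P], ∀ E : Set P, IsUpperSet E →
    ∀ G ∈ Z.Z (FinP P), (∀ A ∈ G, A.1 ≠ (∅ : Set P)) →
    (⋂ A ∈ G, A.1) ⊆ E →
    ∃ K : Set P,
      K ⊆ (⋃ A ∈ G, minSet A.1) ∧
      (∀ A ∈ G, (K ∩ minSet A.1).Nonempty) ∧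
      K ∈ Z.Z P ∧
      (⋂ k ∈ K, Set.Ici k) ⊆ E ∧
      ∀ A ∈ G, ∀ B ∈ G, A.1 ⊆ B.1 →
        K ∩ minSet A.1 ⊆ uSet (K ∩ minSet B.1)

/-- `Z` is union complete. -/
def UnionComplete (Z : SubsetSystem) : Prop :=
  ∀ (P : Type) [PartialOrder P], ∀ S ∈ Z.Z ↥(Z.Z P), (⋃ D ∈ S, D.1) ∈ Z.Z P

/-- `Z` has the finite family union property. -/
def FFUP (Z : SubsetSystem) : Prop :=
  ∀ (P : Type) [PartialOrder P], ∀ (n : ℕ) (S : Fin n → Set (FinP P)),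
    (∀ i, S i ∈ Z.Z (FinP P)) →
    {A : FinP P | ∃ g : Fin n → FinP P, (∀ i, g i ∈ S i) ∧ A.1 = ⋃ i, (g i).1} ∈
      Z.Z (FinP P)

/-- `Z` has property M. -/
def PropM (Z : SubsetSystem) : Prop :=
  ∀ (P : Type) [PartialOrder P], ∀ A : FinP P, {B : FinP P | A.1 ⊆ B.1} ∈ Z.Z (FinP P)

/-- The lower topology `ω(P)`, generated by the complements of principal filters. -/
def lowerTop (P : Type) [PartialOrder P] : TopologicalSpace P :=
  TopologicalSpace.generateFrom {s | ∃ a : P, s = (Set.Ici a)ᶜ}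

/-- The relative cut `E^δ|_A`. -/
def cutIn {P : Type} [PartialOrder P] (E A : Set P) : Set P :=
  {p ∈ A | ∀ m ∈ upperBounds E ∩ A, p ≤ m}

/-- `Z` is subset hereditary. -/
def SubsetHered (Z : SubsetSystem) : Prop :=
  ∀ (P : Type) [PartialOrder P] (Q : Type) [PartialOrder Q] (f : P → Q),
    (∀ x y : P, f x ≤ f y ↔ x ≤ y) → ∀ D : Set P, (D ∈ Z.Z P ↔ f '' D ∈ Z.Z Q)

/-- The `Z`-Scott topology on `P` is lower hereditary. -/
def LowerHered (Z : SubsetSystem) (P : Type) [PartialOrder P] : Prop :=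
  ∀ A ∈ GammaZ Z P,
    GammaZ Z ↥A = {C : Set ↥A | ∃ B ∈ GammaZ Z P, C = Subtype.val ⁻¹' B}

/-- `x ≺_Z y` (the `Z`-beneath relation). -/
def beneathZ (Z : SubsetSystem) {P : Type} [PartialOrder P] (x y : P) : Prop :=
  ∀ A ∈ GammaZ Z P, y ∈ cutOp A → x ∈ A

/-- `P` is `δ_Z`-continuous. -/
def DeltaZCont (Z : SubsetSystem) (P : Type) [PartialOrder P] : Prop :=
  ∀ a : P, a ∈ cutOp {m | beneathZ Z m a}

/-- `k_Z(L)`: the set of `Z`-compact elements. -/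
def kZ (Z : SubsetSystem) (L : Type) [PartialOrder L] : Set L :=
  {x | beneathZ Z x x}

lemma isLowerSet_of_mem_GammaZ {Z : SubsetSystem} {P : Type} [PartialOrder P] {A : Set P}
    (hA : A ∈ GammaZ Z P) : IsLowerSet A := fun a b hba ha =>
  hA {a} (Z.singleton_mem P a) (by simpa using ha) fun _ hu => hba.trans (hu rfl)

lemma Iic_mem_GammaZ (Z : SubsetSystem) {P : Type} [PartialOrder P] (x : P) :
    Iic x ∈ GammaZ Z P := fun _ _ hS _ hy => hy fun _ hs => hS hs

lemma inter_mem_GammaZ {Z : SubsetSystem} {P : Type} [PartialOrder P] {A B : Set P}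
    (hA : A ∈ GammaZ Z P) (hB : B ∈ GammaZ Z P) : A ∩ B ∈ GammaZ Z P := fun S hS h =>
  subset_inter (hA S hS (h.trans inter_subset_left)) (hB S hS (h.trans inter_subset_right))

/-- Weak meet continuity makes the relative pseudocomplement of `U` with respect to `X` closed:
it is the step that uses the hypothesis on `P`. -/
lemma residual_mem_GammaZ {Z : SubsetSystem} {P : Type} [PartialOrder P] (h : WMSZ Z P)
    {X U : Set P} (hX : X ∈ GammaZ Z P) (hU : U ∈ GammaZ Z P) :
    {y | Iic y ∩ X ⊆ U} ∈ GammaZ Z P := by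
  rintro S hS hSU y hy z ⟨hzy, hzX⟩
  have hz : z ∈ cutOp S := fun u hu => le_trans hzy (hy hu)
  refine h z S hS hz U ⟨hU, ?_⟩
  rintro w ⟨hwz, s, hs, hws⟩
  exact hSU hs ⟨hws, isLowerSet_of_mem_GammaZ hX hwz hzX⟩

/-- `P` is weakly meet `s_Z`-continuous iff the complete lattice
`Γ^Z(P)` (ordered by inclusion) is weakly meet `s_Z`-continuous. -/
theorem stmt2 (Z : SubsetSystem) (P : Type) [PartialOrder P] :
    WMSZ Z P ↔ WMSZ Z ↥(GammaZ Z P) := by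
  constructor
  · rintro h X 𝒟 h𝒟 hX 𝒜 ⟨h𝒜, hsub⟩
    let f : ↥(GammaZ Z P) → ↥(GammaZ Z P) := fun C => ⟨X.1 ∩ C.1, inter_mem_GammaZ X.2 C.2⟩
    have hf : Monotone f := fun C C' hC => inter_subset_inter_right X.1 hC
    refine h𝒜 (f '' 𝒟) (Z.image_mem _ _ f hf 𝒟 h𝒟) ?_ ?_
    · rintro _ ⟨D, hD, rfl⟩
      exact hsub ⟨inter_subset_left, D, hD, inter_subset_right⟩
    · intro U hU
      let T : ↥(GammaZ Z P) := ⟨_, residual_mem_GammaZ h X.2 U.2⟩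
      have hT : T ∈ upperBounds 𝒟 := by
        rintro D hD y hy z ⟨hzy, hzX⟩
        exact hU (mem_image_of_mem f hD) ⟨hzX, isLowerSet_of_mem_GammaZ D.2 hzy hy⟩
      intro x hx
      exact hX hT hx ⟨le_refl x, hx⟩
  · rintro h x D hD hx A ⟨hA, hsub⟩
    let η : P → ↥(GammaZ Z P) := fun p => ⟨Iic p, Iic_mem_GammaZ Z p⟩
    have hη : Monotone η := fun p q hpq => Iic_subset_Iic.2 hpq
    have hcut : η x ∈ cutOp (η '' D) := by
      intro U hU y hy
      refine isLowerSet_of_mem_GammaZ U.2 hy (U.2 D hD (fun d hd => ?_) hx)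
      exact hU (mem_image_of_mem η hd) (le_refl d)
    have key := h (η x) (η '' D) (Z.image_mem _ _ η hη D hD) hcut
      (Iic ⟨A, hA⟩) ⟨Iic_mem_GammaZ Z _, ?_⟩
    · exact key (le_refl x)
    · rintro C ⟨hCx, _, ⟨d, hd, rfl⟩, hCd⟩ c hc
      exact hsub ⟨hCx hc, d, hd, hCd hc⟩
end

section
/- Let Z be a Rudin subset system which has the finite family union property and property M, and let P be a poset such that ↟_Z x ∈ I_Z(P) for every x ∈ P. Then the following are equivalent: (1) P is s_Z-continuous; (2) P is weakly meet s_Z-continuous and s_Z-quasicontinuous; (3) P is weakly meet s_Z-continuous, and for all x, y ∈ P with x ≰ y there exist U ∈ σ^Z(P) and V open in the lower topology ω(P) such that x ∈ U, y ∈ V and U ∩ V = ∅. -/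
/-!
The equivalence is obtained as a cycle (1) ⇒ (2) ⇒ (3) ⇒ (1).

(1) ⇒ (2). If `D ∈ Z(P)` and `x ∈ D^δ`, then `↟x ⊆ ↓x ∩ ↓D`, and `↟x = ↓S` with `x ∈ S^δ`; hence
`x` lies in every `Γ^Z`-set containing `↓x ∩ ↓D`. For quasicontinuity, `{↑F : F ∈ ω_Z(p)}` is the
union over `s ∈ S` of the sets `{B : ↑s ⊆ B}`, where `↟p = ↓S`; these lie in `Z(Fin P)` by
property M and depend monotonically on `s`, so union completeness applies.

(2) ⇒ (3). The key is `sigmaZ_of_quasi`: in an `s_Z`-quasicontinuous poset `{w | F ≪_Z w}` belongs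
to `σ^Z(P)` for every finite `F`. If `x ≰ y`, some finite `F ≪_Z x` has `y ∉ ↑F`, and
`{w | F ≪_Z w}` and the complement of `↑F` separate `x` from `y`.

(3) ⇒ (1). If `y` is an upper bound of `↟x` and `x ≰ y`, separation gives `U ∈ σ^Z(P)` containing
`x` and a finite `F` with `U ⊆ ↑F` and `y ∉ ↑F`. If no `z ∈ F` were way below `x`, each `z` would
have a witness `S_z ∈ Z(P)` with `x ∈ S_z^δ` and `S_z ∩ ↑z = ∅`; weak meet continuity, applied
once for each `z` (`exists_common_below`), yields a point of `U` below every `S_z`, which is absurd.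
-/

open Set

/-! ### Cuts, upper sets and the relation `≪_Z` -/

section Basics

variable {P : Type} [PartialOrder P]

lemma mem_uSet_singleton {a b : P} : b ∈ uSet {a} ↔ a ≤ b := by simp [uSet]

lemma uSet_upper {A : Set P} {a b : P} (ha : a ∈ uSet A) (hab : a ≤ b) : b ∈ uSet A := by
  obtain ⟨c, hc, hca⟩ := ha
  exact ⟨c, hc, hca.trans hab⟩

lemma subset_uSet (A : Set P) : A ⊆ uSet A := fun a ha => ⟨a, ha, le_rfl⟩

lemma cutOp_lower {A : Set P} {a b : P} (ha : a ∈ cutOp A) (hba : b ≤ a) : b ∈ cutOp A :=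
  fun _ hu => hba.trans (ha hu)

lemma subset_cutOp (A : Set P) : A ⊆ cutOp A := fun _ ha _ hu => hu ha

lemma cutOp_dSet_subset (S : Set P) : cutOp (dSet S) ⊆ cutOp S := by
  intro x hx u hu
  refine hx ?_
  rintro p ⟨a, ha, hpa⟩
  exact hpa.trans (hu ha)

lemma FinP_le_iff {A B : FinP P} : A ≤ B ↔ B.1 ⊆ A.1 := Iff.rfl

/-- The principal filter `↑s` as an element of `Fin P`. -/
def finUp (s : P) : FinP P := ⟨uSet {s}, {s}, Set.finite_singleton s, rfl⟩

/-- The map `G ↦ ↑(G \ ↑F)` on `Fin P`; it is again finitely generated, by the generators of `G`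
outside `↑F`. -/
def finDiff (F : Set P) (G : FinP P) : FinP P :=
  ⟨uSet (G.1 \ uSet F), by
    obtain ⟨A, G₀, hfin, rfl⟩ := G
    refine ⟨G₀ \ uSet F, hfin.subset Set.sdiff_subset, ?_⟩
    ext p
    constructor
    · rintro ⟨a, ⟨⟨g, hg, hga⟩, haF⟩, hap⟩
      exact ⟨g, ⟨hg, fun h => haF (uSet_upper h hga)⟩, hga.trans hap⟩
    · rintro ⟨g, ⟨hg, hgF⟩, hgp⟩
      exact ⟨g, ⟨subset_uSet _ hg, hgF⟩, hgp⟩⟩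

lemma finDiff_mono (F : Set P) : Monotone (finDiff F) := by
  rintro A B hAB p ⟨a, ⟨haB, haF⟩, hap⟩
  exact ⟨a, ⟨FinP_le_iff.1 hAB haB, haF⟩, hap⟩

lemma finDiff_subset (F : Set P) (G : FinP P) : (finDiff F G).1 ⊆ G.1 := by
  obtain ⟨A, G₀, hfin, rfl⟩ := G
  rintro p ⟨a, ⟨ha, _⟩, hap⟩
  exact uSet_upper ha hap

lemma minSet_uSet_subset (A : Set P) : minSet (uSet A) ⊆ A := by
  rintro x ⟨⟨a, ha, hax⟩, hmin⟩
  have := hmin a (subset_uSet _ ha) hax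
  exact this ▸ ha

variable (Z : SubsetSystem)

lemma mem_uSet_of_wayBelow {F : Set P} {x : P} (h : wayBelowZ Z F {x}) : x ∈ uSet F := by
  obtain ⟨y, hy, hyF⟩ := h {x} (Z.singleton_mem P x)
    ⟨x, subset_cutOp _ rfl, mem_uSet_singleton.2 le_rfl⟩
  rw [Set.mem_singleton_iff] at hy
  exact hy ▸ hyF

lemma wayBelow_mono {F G : Set P} {x y : P} (h : wayBelowZ Z G {x}) (hGF : uSet G ⊆ uSet F)
    (hxy : x ≤ y) : wayBelowZ Z F {y} := by
  rintro S hS ⟨w, hw, hyw⟩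
  obtain ⟨s, hs, hsG⟩ := h S hS
    ⟨w, hw, mem_uSet_singleton.2 (hxy.trans (mem_uSet_singleton.1 hyw))⟩
  exact ⟨s, hs, hGF hsG⟩

/-- A point of `U ∈ σ^Z(P)` lying in `D^δ` can be moved down, inside `U`, to a point of `↓D`. -/
lemma exists_le_mem_dSet {U : Set P} (hU : U ∈ sigmaZ Z P) {D : Set P}
    (hWM : WMSZ Z P) (hD : D ∈ Z.Z P) {x : P} (hxU : x ∈ U) (hxD : x ∈ cutOp D) :
    ∃ x' ∈ U, x' ≤ x ∧ x' ∈ dSet D := by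
  by_contra hcon
  push Not at hcon
  refine hWM x D hD hxD Uᶜ ⟨?_, ?_⟩ hxU
  · intro S hS hSU w hw hwU
    obtain ⟨s, hs, hsU⟩ := hU S hS ⟨w, hw, hwU⟩
    exact hSU hs hsU
  · rintro p ⟨hpx, hpD⟩ hpU
    exact hcon p hpU hpx hpD

end Basics

section Main

variable (Z : SubsetSystem) {P : Type} [PartialOrder P]

/-! ### Consequences of `s_Z`-continuity -/

lemma WMSZ_of_SZCont (h : SZCont Z P) : WMSZ Z P := by
  rintro x D hD hxD A ⟨hA, hsub⟩
  obtain ⟨S, hS, hSx⟩ := h.2 x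
  refine hA S hS (fun s hs => hsub ?_) (cutOp_dSet_subset S (hSx ▸ h.1 x))
  have hsx : wayBelowZ Z {s} {x} := by
    have : s ∈ ddArrow Z x := hSx ▸ (⟨s, hs, le_rfl⟩ : s ∈ dSet S)
    exact this
  refine ⟨mem_uSet_singleton.1 (mem_uSet_of_wayBelow Z hsx), ?_⟩
  obtain ⟨d, hd, hsd⟩ := hsx D hD ⟨x, hxD, mem_uSet_singleton.2 le_rfl⟩
  exact ⟨d, hd, mem_uSet_singleton.1 hsd⟩

lemma SZQuasi_of_SZCont (hU : UnionComplete Z) (hM : PropM Z) (h : SZCont Z P) :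
    SZQuasi Z P := by
  intro p
  obtain ⟨S, hS, hSp⟩ := h.2 p
  have hpS : p ∈ cutOp S := cutOp_dSet_subset S (hSp ▸ h.1 p)
  have hSway : ∀ s ∈ S, wayBelowZ Z {s} {p} := fun s hs => by
    have : s ∈ ddArrow Z p := hSp ▸ (⟨s, hs, le_rfl⟩ : s ∈ dSet S)
    exact this
  constructor
  · let f : P → ↥(Z.Z (FinP P)) := fun s => ⟨{B | (finUp s).1 ⊆ B.1}, hM P (finUp s)⟩
    have hf : Monotone f := by
      intro s t hst B hB q hq
      exact hB (mem_uSet_singleton.2 (hst.trans (mem_uSet_singleton.1 hq)))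
    have hun := hU (FinP P) (f '' S) (Z.image_mem P _ f hf S hS)
    convert hun using 1
    ext A
    simp only [Set.mem_ofPred_eq, Set.mem_iUnion, Set.mem_image, exists_prop]
    constructor
    · rintro ⟨F, ⟨_, hFp⟩, hAF⟩
      obtain ⟨s, hs, hsF⟩ := hFp S hS ⟨p, hpS, mem_uSet_singleton.2 le_rfl⟩
      refine ⟨f s, ⟨s, hs, rfl⟩, fun q hq => ?_⟩
      rw [hAF]
      exact uSet_upper hsF (mem_uSet_singleton.1 hq)
    · rintro ⟨_, ⟨s, hs, rfl⟩, hA⟩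
      obtain ⟨F, hF, hAF⟩ := A.2
      refine ⟨F, ⟨hF, wayBelow_mono Z (hSway s hs) ?_ le_rfl⟩, hAF⟩
      rw [← hAF]
      exact hA
  · ext q
    simp only [Set.mem_Ici, Set.mem_iInter]
    constructor
    · intro hpq F hF
      exact uSet_upper (mem_uSet_of_wayBelow Z hF.2) hpq
    · intro hq
      refine hpS fun s hs => ?_
      exact mem_uSet_singleton.1 (hq {s} ⟨Set.finite_singleton s, hSway s hs⟩)

/-! ### Interpolation in quasicontinuous posets -/

/-- The interpolation property of quasicontinuous posets. Given `S ∈ Z(P)` and `w ∈ S^δ` with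
`F ≪_Z w`, union completeness puts `𝒢 = {↑G : G ≪_Z s for some s ∈ S}` in `Z(Fin P)`. If no member
of `𝒢` were contained in `↑F`, the Rudin property for `{↑(G \ ↑F) : G ∈ 𝒢}` would give `K ∈ Z(P)`
disjoint from `↑F` with `w ∈ K^δ`. -/
lemma sigmaZ_of_quasi (hU : UnionComplete Z) (hR : RudinProp Z) (hQ : SZQuasi Z P)
    (F : Set P) : {w : P | wayBelowZ Z F {w}} ∈ sigmaZ Z P := by
  rintro S hS ⟨w, hwS, hFw⟩
  by_contra hcon
  let f : P → ↥(Z.Z (FinP P)) :=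
    fun s => ⟨{A : FinP P | ∃ G ∈ omegaZ Z s, A.1 = uSet G}, (hQ s).1⟩
  have hf : Monotone f := by
    rintro s t hst A ⟨G, hG, hA⟩
    exact ⟨G, ⟨hG.1, wayBelow_mono Z hG.2 subset_rfl hst⟩, hA⟩
  have hun := hU (FinP P) (f '' S) (Z.image_mem P _ f hf S hS)
  have hdiff := Z.image_mem _ (FinP P) (finDiff F) (finDiff_mono F) _ hun
  have hne : ∀ A ∈ finDiff F '' (⋃ D ∈ f '' S, D.1), A.1 ≠ (∅ : Set P) := by
    rintro _ ⟨B, hB, rfl⟩ hempty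
    obtain ⟨_, ⟨s, hs, rfl⟩, G, hG, hBG⟩ := Set.mem_iUnion₂.1 hB
    refine hcon ⟨s, hs, wayBelow_mono Z hG.2 (fun q hq => ?_) le_rfl⟩
    by_contra hqF
    have : q ∈ (finDiff F B).1 := subset_uSet _ ⟨hBG ▸ hq, hqF⟩
    rw [hempty] at this
    exact this
  have hsub : (⋂ A ∈ finDiff F '' (⋃ D ∈ f '' S, D.1), A.1) ⊆ upperBounds S := by
    intro q hq s hs
    have hq' : q ∈ Set.Ici s := by
      rw [(hQ s).2]
      refine Set.mem_iInter₂.2 fun G hG => ?_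
      let B : FinP P := ⟨uSet G, G, hG.1, rfl⟩
      have hB : B ∈ ⋃ D ∈ f '' S, D.1 :=
        Set.mem_iUnion₂.2 ⟨f s, ⟨s, hs, rfl⟩, G, hG, rfl⟩
      exact finDiff_subset F B (Set.mem_iInter₂.1 hq _ ⟨B, hB, rfl⟩)
    exact hq'
  obtain ⟨K, hKmin, -, hKZ, hKE, -⟩ := hR P (upperBounds S)
    (fun a b hab ha s hs => (ha hs).trans hab) _ hdiff hne hsub
  have hwK : w ∈ cutOp K := fun u hu => hwS (hKE (Set.mem_iInter₂.2 fun k hk => hu hk))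
  obtain ⟨k, hk, hkF⟩ := hFw K hKZ ⟨w, hwK, mem_uSet_singleton.2 le_rfl⟩
  obtain ⟨A, hA, hkA⟩ := Set.mem_iUnion₂.1 (hKmin hk)
  obtain ⟨B, -, rfl⟩ := hA
  exact (minSet_uSet_subset _ hkA).2 hkF

/-! ### The lower topology -/

lemma isOpen_compl_uSet {F : Set P} (hF : F.Finite) : (lowerTop P).IsOpen (uSet F)ᶜ := by
  let := lowerTop P
  have : (uSet F)ᶜ = ⋂ a ∈ F, (Set.Ici a)ᶜ := by
    ext q
    simp [uSet]
  rw [this]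
  exact hF.isOpen_biInter fun a _ => TopologicalSpace.isOpen_generateFrom_of_mem ⟨a, rfl⟩

/-- The complements of finitely generated upper sets form a base of the lower topology. -/
lemma exists_finite_of_isOpen {V : Set P} (hV : (lowerTop P).IsOpen V) :
    ∀ y ∈ V, ∃ F : Set P, F.Finite ∧ y ∉ uSet F ∧ (uSet F)ᶜ ⊆ V := by
  induction hV with
  | basic s hs =>
    obtain ⟨a, rfl⟩ := hs
    intro y hy
    refine ⟨{a}, Set.finite_singleton a, fun h => hy (mem_uSet_singleton.1 h), fun q hq h => ?_⟩
    exact hq (mem_uSet_singleton.2 h)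
  | univ => exact fun y _ => ⟨∅, Set.finite_empty, by simp [uSet], Set.subset_univ _⟩
  | inter s t _ _ ihs iht =>
    rintro y ⟨hys, hyt⟩
    obtain ⟨F, hF, hyF, hFs⟩ := ihs y hys
    obtain ⟨G, hG, hyG, hGt⟩ := iht y hyt
    refine ⟨F ∪ G, hF.union hG, ?_, fun q hq => ⟨hFs ?_, hGt ?_⟩⟩
    · rintro ⟨a, ha | ha, hay⟩
      · exact hyF ⟨a, ha, hay⟩
      · exact hyG ⟨a, ha, hay⟩
    · exact fun ⟨a, ha, haq⟩ => hq ⟨a, Or.inl ha, haq⟩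
    · exact fun ⟨a, ha, haq⟩ => hq ⟨a, Or.inr ha, haq⟩
  | sUnion 𝒱 _ ih =>
    rintro y ⟨W, hW, hyW⟩
    obtain ⟨F, hF, hyF, hFW⟩ := ih W hW y hyW
    exact ⟨F, hF, hyF, hFW.trans (Set.subset_sUnion_of_mem hW)⟩

/-! ### Separation and continuity -/

/-- Weak meet continuity for finitely many `Z`-sets at once: by induction on `F`, one moves down
from `x` inside `U`, passing below one further `S z` at each step. -/
lemma exists_common_below (hWM : WMSZ Z P) {U : Set P} (hU : U ∈ sigmaZ Z P) {x : P}
    (hxU : x ∈ U) {F : Set P} (hF : F.Finite) (S : P → Set P)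
    (hS : ∀ z ∈ F, S z ∈ Z.Z P ∧ x ∈ cutOp (S z)) :
    ∃ x' ∈ U, x' ≤ x ∧ ∀ z ∈ F, x' ∈ dSet (S z) := by
  induction F, hF using Set.Finite.induction_on with
  | empty => exact ⟨x, hxU, le_rfl, by simp⟩
  | @insert a F _ _ ih =>
    obtain ⟨x₁, hx₁U, hx₁x, hx₁⟩ := ih fun z hz => hS z (Set.mem_insert_of_mem a hz)
    obtain ⟨hSa, hxa⟩ := hS a (Set.mem_insert a F)
    obtain ⟨x₂, hx₂U, hx₂x₁, hx₂⟩ :=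
      exists_le_mem_dSet Z hU hWM hSa hx₁U (cutOp_lower hxa hx₁x)
    refine ⟨x₂, hx₂U, hx₂x₁.trans hx₁x, ?_⟩
    rintro z (rfl | hz)
    · exact hx₂
    · obtain ⟨s, hs, hx₁s⟩ := hx₁ z hz
      exact ⟨s, hs, hx₂x₁.trans hx₁s⟩

/-- The separation axiom between `σ^Z(P)` and the lower topology. -/
def Separated (Z : SubsetSystem) (P : Type) [PartialOrder P] : Prop :=
  ∀ x y : P, ¬ x ≤ y → ∃ U ∈ sigmaZ Z P, ∃ V : Set P,
    (lowerTop P).IsOpen V ∧ x ∈ U ∧ y ∈ V ∧ U ∩ V = ∅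

lemma separated_of_quasi (hU : UnionComplete Z) (hR : RudinProp Z) (hQ : SZQuasi Z P) :
    Separated Z P := by
  intro x y hxy
  have hy : y ∉ Set.Ici x := hxy
  rw [(hQ x).2] at hy
  simp only [Set.mem_iInter, not_forall] at hy
  obtain ⟨F, hF, hyF⟩ := hy
  refine ⟨_, sigmaZ_of_quasi Z hU hR hQ F, (uSet F)ᶜ, isOpen_compl_uSet hF.1, hF.2, hyF, ?_⟩
  ext q
  simp only [Set.mem_inter_iff, Set.mem_ofPred_eq, Set.mem_compl_iff, Set.mem_empty_iff_false,
    iff_false, not_and, not_not]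
  exact mem_uSet_of_wayBelow Z

lemma weakSZCont_of_separated (hWM : WMSZ Z P) (hsep : Separated Z P) : WeakSZCont Z P := by
  intro x y hy
  by_contra hxy
  obtain ⟨U, hU, V, hV, hxU, hyV, hUV⟩ := hsep x y hxy
  obtain ⟨F, hF, hyF, hFV⟩ := exists_finite_of_isOpen hV y hyV
  have hnot : ∀ z ∈ F, ∃ S ∈ Z.Z P, x ∈ cutOp S ∧ ¬ (S ∩ uSet {z}).Nonempty := by
    intro z hz
    have hzx : ¬ wayBelowZ Z {z} {x} := fun h => hyF ⟨z, hz, hy h⟩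
    unfold wayBelowZ at hzx
    push Not at hzx
    obtain ⟨S, hS, ⟨w, hw, hxw⟩, hempty⟩ := hzx
    exact ⟨S, hS, cutOp_lower hw (mem_uSet_singleton.1 hxw),
      Set.not_nonempty_iff_eq_empty.2 hempty⟩
  choose! S hSZ hxS hSz using hnot
  obtain ⟨x', hx'U, -, hx'⟩ :=
    exists_common_below Z hWM hU hxU hF S fun z hz => ⟨hSZ z hz, hxS z hz⟩
  have hx'F : x' ∈ uSet F := by
    by_contra hn
    have : x' ∈ U ∩ V := ⟨hx'U, hFV hn⟩
    rw [hUV] at this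
    exact this
  obtain ⟨z, hz, hzx'⟩ := hx'F
  obtain ⟨s, hs, hx's⟩ := hx' z hz
  exact hSz z hz ⟨s, hs, mem_uSet_singleton.2 (hzx'.trans hx's)⟩

end Main

/-- for a Rudin subset system with the finite family union property and
property M, and `P` with `↟_Z x ∈ I_Z(P)` for all `x`, the three conditions are
equivalent. -/
theorem stmt6 (Z : SubsetSystem) (hU : UnionComplete Z) (hR : RudinProp Z)
    (hFFU : FFUP Z) (hM : PropM Z) (P : Type) [PartialOrder P]
    (hI : ∀ x : P, ∃ S ∈ Z.Z P, ddArrow Z x = dSet S) :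
    (SZCont Z P ↔ (WMSZ Z P ∧ SZQuasi Z P)) ∧
    (SZCont Z P ↔ (WMSZ Z P ∧ ∀ x y : P, ¬ x ≤ y → ∃ U ∈ sigmaZ Z P, ∃ V : Set P,
      (lowerTop P).IsOpen V ∧ x ∈ U ∧ y ∈ V ∧ U ∩ V = ∅)) := by
  have h12 : SZCont Z P → WMSZ Z P ∧ SZQuasi Z P :=
    fun h => ⟨WMSZ_of_SZCont Z h, SZQuasi_of_SZCont Z hU hM h⟩
  have h23 : SZQuasi Z P → Separated Z P := separated_of_quasi Z hU hR
  have h31 : WMSZ Z P → Separated Z P → SZCont Z P :=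
    fun hWM hsep => ⟨weakSZCont_of_separated Z hWM hsep, hI⟩
  exact ⟨⟨h12, fun h => h31 h.1 (h23 h.2)⟩,
    ⟨fun h => ⟨(h12 h).1, h23 (h12 h).2⟩, fun h => h31 h.1 h.2⟩⟩
end
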